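/- Let T > 0, let U be a metrizable Suslin space, let G ∈ L¹([0,T];ℝ), and let l : [0,T] × U → [−∞,+∞] be a measurable function such that l(t,·) is lower semicontinuous for every t ∈ [0,T], and satisfying one of the two conditions: (1) |l(t,u)| ≤ G(t) for a.e. t ∈ [0,T] and all u ∈ U, or (2) l ≥ 0. If (μ_n) is a sequence of Young measures on U over [0,T] converging stably to a Young measure μ, then ∫_{U×[0,T]} l(t,u) μ(du,dt) ≤ liminf_{n→∞} ∫_{U×[0,T]} l(t,u) μ_n(du,dt). -/

import Mathlib

open MeasureTheory Set Filter Topology ENNReal NNReal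

/-- A Young measure on `U` over `[0,T]`. -/
def IsYoungMeasure {U : Type*} [MeasurableSpace U] (T : ℝ) (μ : Measure (U × ℝ)) : Prop :=
  ∀ D : Set ℝ, MeasurableSet D → μ (Set.univ ×ˢ D) = volume (D ∩ Set.Icc 0 T)

/-- Stable convergence of Young measures on `U` over `[0,T]`. -/
def StablyTendsTo {U : Type*} [TopologicalSpace U] [MeasurableSpace U] (T : ℝ)
    (μs : ℕ → Measure (U × ℝ)) (μ : Measure (U × ℝ)) : Prop :=
  ∀ D : Set ℝ, MeasurableSet D → D ⊆ Set.Icc 0 T →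
    ∀ f : BoundedContinuousFunction U ℝ,
      Filter.Tendsto (fun n => ∫ p in Set.univ ×ˢ D, f p.1 ∂(μs n)) Filter.atTop
        (nhds (∫ p in Set.univ ×ˢ D, f p.1 ∂μ))

/-- `U` is a Suslin space: a continuous surjective image of a Polish space. -/
def IsSuslin (U : Type*) [TopologicalSpace U] : Prop :=
  ∃ (S : Type) (ts : TopologicalSpace S), @PolishSpace S ts ∧
    ∃ φ : S → U, @Continuous S U ts _ φ ∧ Function.Surjective φ

/-- The nonnegative part of an extended real number, as an extended nonnegative real. -/
noncomputable def erealPos (x : EReal) : ℝ≥0∞ :=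
  if x = ⊤ then ⊤ else ENNReal.ofReal x.toReal

/-- The integral of an extended-real-valued function, with values in `[-∞,+∞]`. -/
noncomputable def eIntegral {α : Type*} [MeasurableSpace α] (μ : Measure α)
    (g : α → EReal) : EReal :=
  ((∫⁻ a, erealPos (g a) ∂μ : ℝ≥0∞) : EReal) - ((∫⁻ a, erealPos (-(g a)) ∂μ : ℝ≥0∞) : EReal)

/-!
Adding the integrable lower bound reduces the claim to nonnegative integrands `g`, and by the layer
cake formula and Fatou's lemma to the superlevel sets of `g`, which have open sections in `U`. Since
`U` is Suslin, measurable subsets of `U × ℝ` have analytic, hence universally measurable,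
projections; so for each `V` in a countable base of `U` the times `t` for which `V` lies in the
`t`-section of the superlevel set form a null-measurable set, and the superlevel set is, up to a
null set of times, a countable union of rectangles `V × A` with `V` open and `A` measurable. A
finite union of such rectangles becomes disjoint after splitting time into the atoms of the algebra
generated by the sets `A`, and on a single rectangle the claim is the portmanteau theorem.
-/

section AnalyticSet

/-- The cylinder of all sequences starting with the list `s`, which is read backwards as in
`PiNat.res`; it indexes the tree of pieces of an analytic set. -/
def resCylinder (s : List ℕ) : Set (ℕ → ℕ) :=
  {x | PiNat.res x s.length = s}

theorem resCylinder_nil : resCylinder [] = univ :=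
  eq_univ_of_forall fun _ => rfl

theorem resCylinder_eq_iUnion_cons (s : List ℕ) :
    resCylinder s = ⋃ n, resCylinder (n :: s) := by
  ext x
  simp [resCylinder, PiNat.res_succ]

theorem resCylinder_res (x : ℕ → ℕ) (k : ℕ) :
    resCylinder (PiNat.res x k) = PiNat.cylinder x k := by
  simp only [resCylinder, PiNat.res_length, PiNat.cylinder_eq_res]

variable {α : Type*}

theorem exists_forall_mem_res_of_mem_nil {H : List ℕ → Set α} {y : α} (hy : y ∈ H [])
    (hH : y ∉ ⋃ s, H s \ ⋃ n, H (n :: s)) : ∃ x : ℕ → ℕ, ∀ k, y ∈ H (PiNat.res x k) := by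
  have exists_child : ∀ s : {s // y ∈ H s}, ∃ n, y ∈ H (n :: s) := by
    rintro ⟨s, hs⟩
    by_contra! hn
    exact hH (mem_iUnion.2 ⟨s, hs, by simpa using hn⟩)
  choose next hnext using exists_child
  let branch : ℕ → {s // y ∈ H s} :=
    fun k => Nat.rec ⟨[], hy⟩ (fun _ s => ⟨next s :: s, hnext s⟩) k
  have res_eq : ∀ k, PiNat.res (fun k => next (branch k)) k = (branch k).1 := by
    intro k
    induction k with
    | zero => rfl
    | succ k ih => rw [PiNat.res_succ, ih]
  exact ⟨_, fun k => res_eq k ▸ (branch k).2⟩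

theorem eq_of_forall_mem_closure_image_cylinder [TopologicalSpace α] [T2Space α]
    {f : (ℕ → ℕ) → α} (hf : Continuous f) {x : ℕ → ℕ} {y : α}
    (hy : ∀ k, y ∈ closure (f '' PiNat.cylinder x k)) : y = f x := by
  by_contra hne
  obtain ⟨V, W, hV, hW, hyV, hxW, hVW⟩ := t2_separation hne
  obtain ⟨k, hk⟩ : ∃ k, PiNat.cylinder x k ⊆ f ⁻¹' W := by
    obtain ⟨_, ⟨z, k, rfl⟩, hxz, hsub⟩ :=
      (PiNat.isTopologicalBasis_cylinders (fun _ => ℕ)).mem_nhds_iff.1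
        ((hW.preimage hf).mem_nhds hxW)
    exact ⟨k, PiNat.mem_cylinder_iff_eq.1 hxz ▸ hsub⟩
  obtain ⟨_, hzV, hzf⟩ := mem_closure_iff.1 (hy k) V hV hyV
  exact hVW.le_bot ⟨hzV, (image_subset_iff.2 hk) hzf⟩

variable [TopologicalSpace α] [MeasurableSpace α]

/-- A measurable superset of `A` inside its closure, of the same measure as `A`; the hulls of the
images of cylinders approximate an analytic set from outside. -/
def closedHull (ν : Measure α) (A : Set α) : Set α :=
  toMeasurable ν A ∩ closure A

theorem subset_closedHull (ν : Measure α) (A : Set α) : A ⊆ closedHull ν A :=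
  subset_inter (subset_toMeasurable ν A) subset_closure

theorem closedHull_subset_closure (ν : Measure α) (A : Set α) : closedHull ν A ⊆ closure A :=
  inter_subset_right

theorem measure_closedHull_sdiff (ν : Measure α) [SFinite ν] {A B : Set α}
    (hB : MeasurableSet B) (hAB : A ⊆ B) : ν (closedHull ν A \ B) = 0 := by
  refine measure_mono_null (sdiff_subset_sdiff_left inter_subset_left) ?_
  rw [sdiff_eq, Measure.measure_toMeasurable_inter_of_sFinite hB.compl,
    disjoint_compl_right_iff_subset.2 hAB |>.inter_eq, measure_empty]

variable [OpensMeasurableSpace α]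

theorem measurableSet_closedHull (ν : Measure α) (A : Set α) : MeasurableSet (closedHull ν A) :=
  (measurableSet_toMeasurable ν A).inter isClosed_closure.measurableSet

theorem nullMeasurableSet_of_analyticSet [T2Space α] {A : Set α} (hA : AnalyticSet A)
    (ν : Measure α) [SFinite ν] : NullMeasurableSet A ν := by
  rw [AnalyticSet] at hA
  obtain rfl | ⟨f, hf, rfl⟩ := hA
  · exact nullMeasurableSet_empty
  let H : List ℕ → Set α := fun s => closedHull ν (f '' resCylinder s)
  have hH_meas : ∀ s, MeasurableSet (H s) := fun s => measurableSet_closedHull ν _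
  have range_subset : range f ⊆ H [] := by
    simpa only [H, resCylinder_nil, image_univ] using subset_closedHull ν (range f)
  have null : ν (⋃ s, H s \ ⋃ n, H (n :: s)) = 0 := by
    refine measure_iUnion_null fun s =>
      measure_closedHull_sdiff ν (MeasurableSet.iUnion fun n => hH_meas _) ?_
    rw [resCylinder_eq_iUnion_cons, image_iUnion]
    exact iUnion_mono fun n => subset_closedHull ν _
  have sdiff_subset : H [] \ range f ⊆ ⋃ s, H s \ ⋃ n, H (n :: s) := by
    rintro y ⟨hy, hyf⟩
    by_contra hbad
    obtain ⟨x, hx⟩ := exists_forall_mem_res_of_mem_nil hy hbad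
    refine hyf ⟨x, (eq_of_forall_mem_closure_image_cylinder hf fun k => ?_).symm⟩
    exact resCylinder_res x k ▸ closedHull_subset_closure ν _ (hx k)
  exact (hH_meas []).nullMeasurableSet.congr
    (ae_eq_set.2 ⟨measure_mono_null sdiff_subset null, by simp [sdiff_eq_empty.2 range_subset]⟩)

end AnalyticSet

section SuslinSpace

variable {U Y : Type*} [TopologicalSpace U]

theorem IsSuslin.secondCountableTopology [TopologicalSpace.PseudoMetrizableSpace U]
    (hU : IsSuslin U) : SecondCountableTopology U := by
  obtain ⟨S, _, _, φ, hφ, hφ_surj⟩ := hU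
  let := TopologicalSpace.pseudoMetrizableSpacePseudoMetric U
  have : TopologicalSpace.SeparableSpace U := hφ_surj.denseRange.separableSpace hφ
  exact UniformSpace.secondCountable_of_separable U

variable [MeasurableSpace U] [BorelSpace U] [TopologicalSpace Y] [PolishSpace Y] [MeasurableSpace Y]
  [BorelSpace Y]

theorem IsSuslin.analyticSet_image_snd (hU : IsSuslin U) {E : Set (U × Y)} (hE : MeasurableSet E) :
    AnalyticSet (Prod.snd '' E) := by
  obtain ⟨S, _, _, φ, hφ, hφ_surj⟩ := hU
  borelize S
  have image_preimage : Prod.snd '' E = Prod.snd '' (Prod.map φ (id : Y → Y) ⁻¹' E) := by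
    rw [← image_preimage_eq E (hφ_surj.prodMap Function.surjective_id), image_image,
      preimage_image_preimage]
    rfl
  rw [image_preimage]
  exact (hE.preimage (hφ.measurable.prodMap measurable_id)).analyticSet.image_of_continuous
    continuous_snd

theorem IsSuslin.nullMeasurableSet_forall_mem (hU : IsSuslin U) {V : Set U}
    (hV : MeasurableSet V) {O : Set (U × Y)} (hO : MeasurableSet O) (ν : Measure Y) [SFinite ν] :
    NullMeasurableSet {t | ∀ u ∈ V, (u, t) ∈ O} ν := by
  have compl_eq : {t | ∀ u ∈ V, (u, t) ∈ O}ᶜ = Prod.snd '' (V ×ˢ univ \ O) := by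
    ext t
    simp
  rw [← NullMeasurableSet.compl_iff, compl_eq]
  exact nullMeasurableSet_of_analyticSet
    (hU.analyticSet_image_snd ((hV.prod .univ).diff hO)) ν

theorem IsSuslin.exists_iUnion_prod_ae_eq [TopologicalSpace.PseudoMetrizableSpace U]
    (hU : IsSuslin U) {O : Set (U × Y)} (hO : MeasurableSet O) {ν : Measure Y} [SFinite ν]
    (hO_open : ∀ᵐ t ∂ν, IsOpen {u | (u, t) ∈ O}) :
    ∃ (B : ℕ → Set U) (A : ℕ → Set Y), (∀ i, IsOpen (B i)) ∧ (∀ i, MeasurableSet (A i)) ∧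
      ⋃ i, B i ×ˢ A i ⊆ O ∧ ∀ᵐ t ∂ν, ∀ u, (u, t) ∈ O → (u, t) ∈ ⋃ i, B i ×ˢ A i := by
  have := hU.secondCountableTopology
  obtain ⟨B, hB⟩ := TopologicalSpace.exists_seq_basis U
  have hB_open : ∀ i, IsOpen (B i) := fun i => hB.isOpen (mem_range_self i)
  choose A hA_sub hA_meas hA_ae using fun i =>
    (hU.nullMeasurableSet_forall_mem (hB_open i).measurableSet hO ν).exists_measurable_subset_ae_eq
  refine ⟨B, A, hB_open, hA_meas, ?_, ?_⟩
  · exact iUnion_subset fun i => fun ⟨u, t⟩ ⟨hu, ht⟩ => hA_sub i ht u hu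
  · filter_upwards [hO_open, ae_all_iff.2 fun i => (hA_ae i).mem_iff] with t ht_open ht_mem u hu
    obtain ⟨_, ⟨i, rfl⟩, hui, hsub⟩ := hB.exists_subset_of_mem_open hu ht_open
    exact mem_iUnion.2 ⟨i, hui, (ht_mem i).2 hsub⟩

end SuslinSpace

section Liminf

variable {ι : Type*} {F : Filter ι} [F.IsCountablyGenerated]

theorem tsum_liminf_le_liminf_tsum {κ : Type*} (f : ι → κ → ℝ≥0∞) :
    ∑' k, liminf (fun i => f i k) F ≤ liminf (fun i => ∑' k, f i k) F := by
  let : MeasurableSpace κ := ⊤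
  simpa only [lintegral_count] using
    lintegral_liminf_le (μ := Measure.count) fun i => measurable_from_top (f := f i)

variable {α : Type*} [MeasurableSpace α]

theorem lintegral_eq_lintegral_meas_ofReal_lt (ν : Measure α) {g : α → ℝ≥0∞} (hg : Measurable g) :
    ∫⁻ a, g a ∂ν = ∫⁻ s in Ioi (0 : ℝ), ν {a | ENNReal.ofReal s < g a} := by
  by_cases h_top : ν {a | g a = ∞} = 0
  · have g_ne_top : ∀ᵐ a ∂ν, g a ≠ ∞ := by simpa [ae_iff] using h_top
    calc ∫⁻ a, g a ∂ν
        = ∫⁻ a, ENNReal.ofReal (g a).toReal ∂ν :=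
          lintegral_congr_ae (g_ne_top.mono fun a ha => (ENNReal.ofReal_toReal ha).symm)
      _ = ∫⁻ s in Ioi (0 : ℝ), ν {a | s < (g a).toReal} :=
          lintegral_eq_lintegral_meas_lt ν (.of_forall fun _ => ENNReal.toReal_nonneg)
            hg.ennreal_toReal.aemeasurable
      _ = ∫⁻ s in Ioi (0 : ℝ), ν {a | ENNReal.ofReal s < g a} := by
          refine setLIntegral_congr_fun measurableSet_Ioi fun s hs => measure_congr ?_
          filter_upwards [g_ne_top] with a ha
          exact propext (ENNReal.ofReal_lt_iff_lt_toReal (le_of_lt hs) ha).symm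
  · rw [lintegral_eq_top_of_measure_eq_top_ne_zero hg.aemeasurable h_top, eq_comm, eq_top_iff]
    calc ∞ = ∫⁻ _ in Ioi (0 : ℝ), ν {a | g a = ∞} := by
          rw [setLIntegral_const, Real.volume_Ioi, ENNReal.mul_top h_top]
      _ ≤ ∫⁻ s in Ioi (0 : ℝ), ν {a | ENNReal.ofReal s < g a} :=
          lintegral_mono fun s => measure_mono fun a ha => ENNReal.ofReal_lt_top.trans_eq ha.symm

theorem lintegral_le_liminf_lintegral {g : α → ℝ≥0∞} (hg : Measurable g) {ν : Measure α}
    {νs : ι → Measure α}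
    (h : ∀ c, ν {a | c < g a} ≤ liminf (fun i => νs i {a | c < g a}) F) :
    ∫⁻ a, g a ∂ν ≤ liminf (fun i => ∫⁻ a, g a ∂(νs i)) F := by
  simp only [lintegral_eq_lintegral_meas_ofReal_lt _ hg]
  refine (lintegral_mono fun s => h _).trans (lintegral_liminf_le fun i => ?_)
  refine Antitone.measurable fun s t hst => measure_mono fun a ha => ?_
  exact (ENNReal.ofReal_le_ofReal hst).trans_lt ha

end Liminf

section OpenRectangles

variable {ι U Y : Type*} {F : Filter ι} [TopologicalSpace U] [MeasurableSpace U] [MeasurableSpace Y]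

/-- The inequality `ν ≤ liminf νs` on products of an open and a measurable set: the portmanteau
form of stable convergence. -/
def LeLiminfOnOpenRects (ν : Measure (U × Y)) (νs : ι → Measure (U × Y)) (F : Filter ι) : Prop :=
  ∀ V : Set U, IsOpen V → ∀ D : Set Y, MeasurableSet D →
    ν (V ×ˢ D) ≤ liminf (fun i => νs i (V ×ˢ D)) F

theorem measurableSet_setOf_mem_eq {κ : Type*} [Countable κ] {A : κ → Set Y}
    (hA : ∀ k, MeasurableSet (A k)) (s : Set κ) : MeasurableSet {t | {k | t ∈ A k} = s} := by
  simp only [Set.ext_iff, mem_ofPred_eq, ofPred_forall]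
  exact MeasurableSet.iInter fun k => ((hA k).mem.iff measurable_const).setOf

theorem measure_iUnion_prod_eq_tsum [OpensMeasurableSpace U] (ν : Measure (U × Y)) {κ : Type*}
    [Finite κ] {B : κ → Set U} {A : κ → Set Y} (hB : ∀ k, MeasurableSet (B k))
    (hA : ∀ k, MeasurableSet (A k)) :
    ν (⋃ k, B k ×ˢ A k) = ∑' s : Set κ, ν ((⋃ k ∈ s, B k) ×ˢ {t | {k | t ∈ A k} = s}) := by
  have union_eq : ⋃ k, B k ×ˢ A k = ⋃ s : Set κ, (⋃ k ∈ s, B k) ×ˢ {t | {k | t ∈ A k} = s} := by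
    ext
    simp [and_comm]
  rw [union_eq, measure_iUnion]
  · exact fun s t hst => Set.disjoint_left.2 fun p hs ht => hst (hs.2.symm.trans ht.2)
  · exact fun s => .prod (.biUnion (to_countable s) fun k _ => hB k)
      (measurableSet_setOf_mem_eq hA s)

namespace LeLiminfOnOpenRects

variable [F.IsCountablyGenerated] {ν : Measure (U × Y)} {νs : ι → Measure (U × Y)}

theorem measure_iUnion_prod_le_liminf_of_finite [OpensMeasurableSpace U]
    (h : LeLiminfOnOpenRects ν νs F) {κ : Type*} [Finite κ] {B : κ → Set U} {A : κ → Set Y}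
    (hB : ∀ k, IsOpen (B k)) (hA : ∀ k, MeasurableSet (A k)) :
    ν (⋃ k, B k ×ˢ A k) ≤ liminf (fun i => νs i (⋃ k, B k ×ˢ A k)) F := by
  simp only [measure_iUnion_prod_eq_tsum _ (fun k => (hB k).measurableSet) hA]
  refine le_trans (ENNReal.tsum_le_tsum fun s => ?_) (tsum_liminf_le_liminf_tsum _)
  exact h _ (isOpen_biUnion fun k _ => hB k) _ (measurableSet_setOf_mem_eq hA s)

theorem measure_iUnion_prod_le_liminf [OpensMeasurableSpace U] (h : LeLiminfOnOpenRects ν νs F)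
    {B : ℕ → Set U} {A : ℕ → Set Y} (hB : ∀ k, IsOpen (B k)) (hA : ∀ k, MeasurableSet (A k)) :
    ν (⋃ k, B k ×ˢ A k) ≤ liminf (fun i => νs i (⋃ k, B k ×ˢ A k)) F := by
  rw [measure_iUnion_eq_iSup_accumulate]
  refine iSup_le fun n => ?_
  have accumulate_eq : accumulate (fun k => B k ×ˢ A k) n = ⋃ k : Iic n, B k ×ˢ A k :=
    biUnion_eq_iUnion (Iic n) _
  rw [accumulate_eq]
  refine (h.measure_iUnion_prod_le_liminf_of_finite (κ := Iic n) (fun k => hB k)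
    fun k => hA k).trans (liminf_le_liminf (.of_forall fun i => measure_mono ?_))
  exact iUnion_subset fun k => subset_iUnion (fun k => B k ×ˢ A k) k

variable [TopologicalSpace.PseudoMetrizableSpace U] [BorelSpace U] [TopologicalSpace Y]
  [PolishSpace Y] [BorelSpace Y] [SFinite ν]

theorem measure_le_liminf_of_isOpen_sections (h : LeLiminfOnOpenRects ν νs F)
    (hU : IsSuslin U) {O : Set (U × Y)} (hO : MeasurableSet O)
    (hO_open : ∀ᵐ t ∂(ν.map Prod.snd), IsOpen {u | (u, t) ∈ O}) :
    ν O ≤ liminf (fun i => νs i O) F := by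
  obtain ⟨B, A, hB, hA, hsub, hae⟩ := hU.exists_iUnion_prod_ae_eq hO hO_open
  have hO_le : O ≤ᵐ[ν] ⋃ k, B k ×ˢ A k :=
    (ae_of_ae_map measurable_snd.aemeasurable hae).mono fun p hp => hp p.1
  calc ν O ≤ ν (⋃ k, B k ×ˢ A k) := measure_mono_ae hO_le
    _ ≤ liminf (fun i => νs i (⋃ k, B k ×ˢ A k)) F := h.measure_iUnion_prod_le_liminf hB hA
    _ ≤ liminf (fun i => νs i O) F := liminf_le_liminf (.of_forall fun i => measure_mono hsub)

theorem lintegral_le_liminf (h : LeLiminfOnOpenRects ν νs F) (hU : IsSuslin U)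
    {g : U × Y → ℝ≥0∞} (hg : Measurable g)
    (hg_lsc : ∀ᵐ t ∂(ν.map Prod.snd), LowerSemicontinuous fun u => g (u, t)) :
    ∫⁻ p, g p ∂ν ≤ liminf (fun i => ∫⁻ p, g p ∂(νs i)) F :=
  lintegral_le_liminf_lintegral hg fun c =>
    h.measure_le_liminf_of_isOpen_sections hU (measurableSet_lt measurable_const hg)
      (hg_lsc.mono fun _ ht => ht.isOpen_preimage c)

end LeLiminfOnOpenRects

end OpenRectangles

section YoungMeasure

theorem measure_le_liminf_of_isOpen {ι α : Type*} {F : Filter ι} [F.NeBot] [TopologicalSpace α]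
    [HasOuterApproxClosed α] [MeasurableSpace α] [OpensMeasurableSpace α] {ν : FiniteMeasure α}
    {νs : ι → FiniteMeasure α} (h : Tendsto νs F (𝓝 ν)) {V : Set α} (hV : IsOpen V) :
    (ν : Measure α) V ≤ liminf (fun i => (νs i : Measure α) V) F := by
  let f : ℕ → BoundedContinuousFunction α ℝ≥0 := fun k => 1 - hV.isClosed_compl.apprSeq k
  have f_le_one : ∀ k x, f k x ≤ 1 := fun k x => tsub_le_self
  have f_eq_zero : ∀ k, ∀ x ∉ V, f k x = 0 := fun k x hx =>
    tsub_eq_zero_of_le (HasOuterApproxClosed.apprSeq_apply_eq_one hV.isClosed_compl k hx).ge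
  have f_tendsto : Tendsto (fun k x => f k x) atTop (𝓝 (V.indicator fun _ => 1)) := by
    rw [tendsto_pi_nhds]
    intro x
    have one_sub_indicator :
        1 - Vᶜ.indicator (fun _ => (1 : ℝ≥0)) x = V.indicator (fun _ => 1) x := by
      by_cases hx : x ∈ V <;> simp [hx]
    rw [← one_sub_indicator]
    exact tendsto_const_nhds.sub
      (tendsto_pi_nhds.1 (HasOuterApproxClosed.tendsto_apprSeq hV.isClosed_compl) x)
  have lintegral_f_le : ∀ (k : ℕ) (μ : Measure α), ∫⁻ x, f k x ∂μ ≤ μ V := fun k μ => by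
    rw [← lintegral_indicator_one hV.measurableSet]
    refine lintegral_mono fun x => ?_
    by_cases hx : x ∈ V
    · simpa [hx] using f_le_one k x
    · simp [hx, f_eq_zero k x hx]
  refine le_of_tendsto' (measure_of_cont_bdd_of_tendsto_indicator (ν : Measure α) hV.measurableSet
    f f_le_one f_tendsto) fun k => ?_
  rw [← (FiniteMeasure.tendsto_iff_forall_lintegral_tendsto.1 h (f k)).liminf_eq]
  exact liminf_le_liminf (.of_forall fun i => lintegral_f_le k _)

variable {U : Type*} [MeasurableSpace U] {T : ℝ} {μ : Measure (U × ℝ)}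

theorem IsYoungMeasure.map_snd_restrict (hμ : IsYoungMeasure T μ) :
    (μ.restrict (univ ×ˢ Icc 0 T)).map Prod.snd = volume.restrict (Icc 0 T) := by
  ext D hD
  rw [Measure.map_apply measurable_snd hD, Measure.restrict_apply (measurable_snd hD),
    Measure.restrict_apply hD, ← univ_prod, prod_inter_prod, univ_inter,
    hμ _ (hD.inter measurableSet_Icc), inter_assoc, inter_self]

theorem IsYoungMeasure.isFiniteMeasure (hμ : IsYoungMeasure T μ) : IsFiniteMeasure μ := by
  refine ⟨?_⟩
  rw [← univ_prod_univ, hμ univ .univ, univ_inter]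
  exact measure_Icc_lt_top

variable [TopologicalSpace U] [HasOuterApproxClosed U] [OpensMeasurableSpace U]

theorem StablyTendsTo.leLiminfOnOpenRects {μs : ℕ → Measure (U × ℝ)} (h : StablyTendsTo T μs μ)
    (hμs : ∀ n, IsYoungMeasure T (μs n)) (hμ : IsYoungMeasure T μ) :
    LeLiminfOnOpenRects (μ.restrict (univ ×ˢ Icc 0 T))
      (fun n => (μs n).restrict (univ ×ˢ Icc 0 T)) atTop := by
  intro V hV D hD
  have := hμ.isFiniteMeasure
  have := fun n => (hμs n).isFiniteMeasure
  have hDT : MeasurableSet (D ∩ Icc 0 T) := hD.inter measurableSet_Icc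
  let section_measure (ν : Measure (U × ℝ)) [IsFiniteMeasure ν] : FiniteMeasure U :=
    ⟨(ν.restrict (univ ×ˢ (D ∩ Icc 0 T))).fst, inferInstance⟩
  have section_measure_apply : ∀ (ν : Measure (U × ℝ)) [IsFiniteMeasure ν],
      (section_measure ν : Measure U) V = ν.restrict (univ ×ˢ Icc 0 T) (V ×ˢ D) := fun ν _ => by
    rw [FiniteMeasure.toMeasure_mk, Measure.fst_apply hV.measurableSet,
      Measure.restrict_apply (measurable_fst hV.measurableSet),
      Measure.restrict_apply (hV.measurableSet.prod hD), ← prod_univ, prod_inter_prod,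
      prod_inter_prod, univ_inter, inter_univ]
  have integral_section_measure : ∀ (ν : Measure (U × ℝ)) [IsFiniteMeasure ν]
      (f : BoundedContinuousFunction U ℝ), ∫ u, f u ∂(section_measure ν : Measure U) =
        ∫ p in univ ×ˢ (D ∩ Icc 0 T), f p.1 ∂ν := fun ν _ f =>
    integral_map measurable_fst.aemeasurable
      f.continuous.measurable.aestronglyMeasurable
  have tendsto : Tendsto (fun n => section_measure (μs n)) atTop (𝓝 (section_measure μ)) := by
    rw [FiniteMeasure.tendsto_iff_forall_integral_tendsto]
    intro f
    simpa only [integral_section_measure] using h _ hDT inter_subset_right f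
  simpa only [section_measure_apply] using measure_le_liminf_of_isOpen tendsto hV

end YoungMeasure

section ExtendedIntegral

theorem toENNReal_add_eq_toENNReal_neg_add {x : EReal} {c : ℝ≥0∞} (h : -(c : EReal) ≤ x) :
    x.toENNReal + c = (-x).toENNReal + (x + c).toENNReal := by
  rcases le_total 0 x with hx | hx
  · rw [EReal.toENNReal_add hx (EReal.coe_ennreal_nonneg c), EReal.toENNReal_coe,
      EReal.toENNReal_of_nonpos (EReal.neg_le_zero.2 hx), zero_add]
  · lift -x to ℝ≥0∞ using (by simpa using hx) with y hy
    obtain rfl : x = -(y : EReal) := by rw [hy, neg_neg]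
    have y_le_c : y ≤ c := by simpa using h
    rw [EReal.toENNReal_of_nonpos hx, zero_add, EReal.toENNReal_coe, add_comm _ (c : EReal),
      ← sub_eq_add_neg, EReal.toENNReal_sub (EReal.coe_ennreal_nonneg y), EReal.toENNReal_coe,
      EReal.toENNReal_coe, add_tsub_cancel_of_le y_le_c]

theorem coe_sub_coe_eq_of_add_eq_add {p q m c : ℝ≥0∞} (hm : m ≠ ∞) (hc : c ≠ ∞)
    (h : p + c = m + q) : (p : EReal) - m = q - c := by
  lift m to ℝ≥0 using hm
  lift c to ℝ≥0 using hc
  induction p with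
  | top =>
    obtain rfl : q = ∞ := by simpa using h.symm
    simp
  | coe p =>
    induction q with
    | top => simp at h
    | coe q =>
      have h_add : (p : ℝ) + c = m + q := by exact_mod_cast h
      have h_sub : (p : ℝ) - m = q - c := by linarith
      simpa only [EReal.coe_sub, EReal.coe_nnreal_eq_coe_real] using
        congrArg Real.toEReal h_sub

theorem continuous_ereal_add_const {c : EReal} (hc_bot : c ≠ ⊥) (hc_top : c ≠ ⊤) :
    Continuous fun x => x + c :=
  continuous_iff_continuousAt.2 fun x =>
    (EReal.continuousAt_add (Or.inr hc_bot) (Or.inr hc_top)).comp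
      (f := fun x : EReal => (x, c)) (by fun_prop)

theorem lowerSemicontinuous_toENNReal_add {U : Type*} [TopologicalSpace U] {f : U → EReal}
    (hf : LowerSemicontinuous f) {c : ℝ≥0∞} (hc : c ≠ ∞) :
    LowerSemicontinuous fun u => (f u + c).toENNReal :=
  (EReal.continuous_toENNReal.comp
    (continuous_ereal_add_const (by simp) (by simpa using hc))).comp_lowerSemicontinuous hf
    fun _ _ h => EReal.toENNReal_le_toENNReal (add_le_add_left h _)

theorem coe_sub_le_liminf_coe_sub {ι : Type*} {F : Filter ι} [F.NeBot] {a c : ℝ≥0∞}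
    {x : ι → ℝ≥0∞} (hc : c ≠ ∞) (h : a ≤ liminf x F) :
    (a : EReal) - c ≤ liminf (fun i => (x i : EReal) - c) F := by
  have mono : Monotone fun y : ℝ≥0∞ => (y : EReal) - c := fun y z hyz =>
    EReal.sub_le_sub (EReal.coe_ennreal_le_coe_ennreal_iff.2 hyz) le_rfl
  have cont : Continuous fun y : ℝ≥0∞ => (y : EReal) - c :=
    (continuous_ereal_add_const (by simpa using hc) (by simp)).comp
      continuous_coe_ennreal_ereal
  exact (mono h).trans (mono.map_liminf_of_continuousAt x cont.continuousAt).le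

theorem eIntegral_eq_lintegral_add_sub {α : Type*} [MeasurableSpace α] {ν : Measure α}
    {f : α → EReal} {c : α → ℝ≥0∞} (hf : Measurable f) (hc : Measurable c)
    (hc_fin : ∫⁻ a, c a ∂ν ≠ ∞) (h : ∀ᵐ a ∂ν, -(c a : EReal) ≤ f a) :
    eIntegral ν f =
      ((∫⁻ a, (f a + c a).toENNReal ∂ν : ℝ≥0∞) : EReal) - (∫⁻ a, c a ∂ν : ℝ≥0∞) := by
  have neg_le : ∫⁻ a, (-f a).toENNReal ∂ν ≤ ∫⁻ a, c a ∂ν := by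
    refine lintegral_mono_ae (h.mono fun a ha => ?_)
    simpa using EReal.toENNReal_le_toENNReal (EReal.neg_le.1 ha)
  refine coe_sub_coe_eq_of_add_eq_add (neg_le.trans_lt hc_fin.lt_top).ne hc_fin ?_
  change ∫⁻ a, (f a).toENNReal ∂ν + _ = ∫⁻ a, (-f a).toENNReal ∂ν + _
  rw [← lintegral_add_right _ hc, ← lintegral_add_left (by fun_prop)]
  exact lintegral_congr_ae (h.mono fun a => toENNReal_add_eq_toENNReal_neg_add)

end ExtendedIntegral

theorem IsYoungMeasure.eIntegral_restrict_eq {U : Type*} [MeasurableSpace U] {T : ℝ}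
    {μ : Measure (U × ℝ)} (hμ : IsYoungMeasure T μ) {f : U × ℝ → EReal} (hf : Measurable f)
    {c : ℝ → ℝ≥0∞} (hc : Measurable c) (hc_fin : ∫⁻ t in Icc 0 T, c t ≠ ∞)
    (h : ∀ᵐ t ∂(volume.restrict (Icc 0 T)), ∀ u, -(c t : EReal) ≤ f (u, t)) :
    eIntegral (μ.restrict (univ ×ˢ Icc 0 T)) f =
      ((∫⁻ p in univ ×ˢ Icc 0 T, (f p + c p.2).toENNReal ∂μ : ℝ≥0∞) : EReal) -
        (∫⁻ t in Icc 0 T, c t : ℝ≥0∞) := by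
  have lintegral_c : ∫⁻ t in Icc 0 T, c t = ∫⁻ p in univ ×ˢ Icc 0 T, c p.2 ∂μ := by
    rw [← hμ.map_snd_restrict, lintegral_map hc measurable_snd]
  rw [lintegral_c] at hc_fin ⊢
  rw [← hμ.map_snd_restrict] at h
  exact eIntegral_eq_lintegral_add_sub hf (hc.comp measurable_snd) hc_fin
    ((ae_of_ae_map measurable_snd.aemeasurable h).mono fun p hp => hp p.1)

theorem young_measure_integral_lsc_stable_general {U : Type*} [TopologicalSpace U]
    [TopologicalSpace.PseudoMetrizableSpace U] [MeasurableSpace U] [BorelSpace U]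
    (hU : IsSuslin U) {T : ℝ} {G : ℝ → ℝ} (hG : IntegrableOn G (Icc 0 T)) {l : ℝ → U → EReal}
    (hlmeas : Measurable fun p : U × ℝ => l p.2 p.1)
    (hlsc : ∀ᵐ t ∂(volume.restrict (Icc 0 T)), LowerSemicontinuous (l t))
    (hl : ∀ᵐ t ∂(volume.restrict (Icc 0 T)), ∀ u, -(G t : EReal) ≤ l t u)
    {μs : ℕ → Measure (U × ℝ)} {μ : Measure (U × ℝ)}
    (hμs : ∀ n, IsYoungMeasure T (μs n)) (hμ : IsYoungMeasure T μ)
    (hconv : StablyTendsTo T μs μ) :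
    eIntegral (μ.restrict (univ ×ˢ Icc 0 T)) (fun p => l p.2 p.1) ≤
      liminf (fun n => eIntegral ((μs n).restrict (univ ×ˢ Icc 0 T)) (fun p => l p.2 p.1))
        atTop := by
  obtain ⟨G', hG'_meas, hGG'⟩ := hG.aemeasurable
  let c : ℝ → ℝ≥0∞ := fun t => ENNReal.ofReal (G' t)
  have hc : Measurable c := hG'_meas.ennreal_ofReal
  have hc_fin : ∫⁻ t in Icc 0 T, c t ≠ ∞ := (hG.congr hGG').lintegral_lt_top.ne
  have hl_c : ∀ᵐ t ∂(volume.restrict (Icc 0 T)), ∀ u, -(c t : EReal) ≤ l t u := by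
    filter_upwards [hl, hGG'] with t ht hGt u
    refine le_trans ?_ (ht u)
    rw [EReal.neg_le_neg_iff, hGt, EReal.coe_ennreal_ofReal]
    exact_mod_cast le_max_left _ _
  have := hμ.isFiniteMeasure
  rw [hμ.eIntegral_restrict_eq hlmeas hc hc_fin hl_c]
  simp only [fun n => (hμs n).eIntegral_restrict_eq hlmeas hc hc_fin hl_c]
  refine coe_sub_le_liminf_coe_sub hc_fin
    ((hconv.leLiminfOnOpenRects hμs hμ).lintegral_le_liminf hU ?_ ?_)
  · exact measurable_ereal_toENNReal.comp
      (hlmeas.add (measurable_coe_ennreal_ereal.comp (hc.comp measurable_snd)))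
  · rw [hμ.map_snd_restrict]
    filter_upwards [hlsc, ae_lt_top hc hc_fin] with t ht hct
    exact lowerSemicontinuous_toENNReal_add ht hct.ne

/-- Lower semicontinuity of integral functionals of Young measures under
stable convergence, for integrands `l : [0,T] × U → [-∞,+∞]` that are measurable, lower
semicontinuous in `u`, and either dominated by an integrable `G` or nonnegative. -/
theorem young_measure_integral_lsc_stable
    (T : ℝ) (hT : 0 < T)
    (U : Type*) [TopologicalSpace U] [TopologicalSpace.MetrizableSpace U]
    [MeasurableSpace U] [BorelSpace U] (hU : IsSuslin U)
    (G : ℝ → ℝ) (hG : IntegrableOn G (Set.Icc 0 T))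
    (l : ℝ → U → EReal)
    (hlmeas : Measurable fun p : U × ℝ => l p.2 p.1)
    (hlsc : ∀ t : ℝ, LowerSemicontinuous (l t))
    (hcond :
      (∀ᵐ t ∂(volume.restrict (Set.Icc (0:ℝ) T)),
        ∀ u : U, -((G t : EReal)) ≤ l t u ∧ l t u ≤ (G t : EReal)) ∨
      (∀ (t : ℝ) (u : U), 0 ≤ l t u))
    (μs : ℕ → Measure (U × ℝ)) (μ : Measure (U × ℝ))
    (hμs : ∀ n, IsYoungMeasure T (μs n)) (hμ : IsYoungMeasure T μ)
    (hconv : StablyTendsTo T μs μ) :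
    eIntegral (μ.restrict (Set.univ ×ˢ Set.Icc (0:ℝ) T)) (fun p => l p.2 p.1) ≤
      Filter.liminf
        (fun n => eIntegral ((μs n).restrict (Set.univ ×ˢ Set.Icc (0:ℝ) T)) (fun p => l p.2 p.1))
        Filter.atTop := by
  rcases hcond with hbound | hnonneg
  · exact young_measure_integral_lsc_stable_general hU hG hlmeas (.of_forall hlsc)
      (hbound.mono fun t ht u => (ht u).1) hμs hμ hconv
  · exact young_measure_integral_lsc_stable_general (G := 0) hU integrableOn_zero hlmeas
      (.of_forall hlsc) (.of_forall fun t u => by simpa using hnonneg t u) hμs hμ hconv
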